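/- Let x ∈ O(m,n) be nondegenerate and not lying in A, with rank r and level ℓ, and suppose x satisfies (†). Then the map α ↦ α∘∂_ℓ is injective on supp(x); consequently supp(x∂_ℓ) = {α∘∂_ℓ : α ∈ supp(x)}. -/

import Mathlib

/-!
Write `n` for the top value. The operators in `supp x̌` and `supp x̄` are told apart by their value
at `r`. If `1 ≤ ℓ < r`, then the value at `ℓ` of an operator in `supp x̌` is its value at `r`, and
the value at `ℓ` of an operator in `supp x̄` is its value at `ℓ - 1` by (†). Since neither `r` nor
`ℓ - 1` equals `ℓ`, an operator in `supp x` is determined by its restriction along `∂ℓ`.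

The remaining positions of `ℓ ≤ r` are impossible. If `0 < ℓ = r`, then (†) contradicts the
minimality of `r`. If `0 = ℓ < r`, then all operators in `supp x` agree at `0` and `1` (in the
encoding, (†) at `ℓ = 0` is degeneracy at the truncated index `0`), so `x` is degenerate. If
`ℓ = r = 0`, then the constant operator `n` lies in `supp x`, and this forces `x` to be that
operator (`memO.eq_single_of_mem_support`), so `x` lies in `A`.

The last fact says that a map sending the initial vertex to the top vertex is constant. Vertices
and edges are handled by positivity of `x` and monotonicity of values. In higher dimension,
induction gives that `z = x - n` has vanishing faces and nonnegative coefficients on injective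
operators. The Vandermonde determinant is positive on injective operators, zero on the others, and
its expansion along the column of ones writes it as an alternating sum of functions of the faces.
Pairing with `z` gives zero, so `z` is supported on degenerate operators. A pointwise
maximal operator `α` in `supp z`, degenerate at `j`, would be the only one in `supp z` with its
`∂(j+1)`-face, contradicting `z ∂(j+1) = 0`.
-/


abbrev ZD (a b : ℕ) := (Fin a →o Fin b) →₀ ℤ

noncomputable def act {a b c : ℕ} (x : ZD b c) (β : Fin a →o Fin b) : ZD a c :=
  Finsupp.mapDomain (fun α => α.comp β) x

def face {m : ℕ} (i : Fin (m+1)) : Fin m →o Fin (m+1) :=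
  ⟨i.succAbove, (Fin.succAboveOrderEmb i).monotone⟩

def degen {m : ℕ} (i : Fin m) : Fin (m+1) →o Fin m :=
  ⟨i.predAbove, Fin.predAbove_right_monotone i⟩

def memO {a b : ℕ} (x : ZD a b) : Prop :=
  (x.sum fun _ c => c) = 1 ∧
    ∀ (p : ℕ) (β : Fin (p+1) →o Fin a) (γ : Fin (p+1) →o Fin b),
      Function.Injective ⇑β → Function.Injective ⇑γ → 0 ≤ act x β γ

/-- The witness operation `x ▽ₖ y`, for `x, y ∈ ℤΔ([m],[n])` and `1 ≤ k ≤ m`. -/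
noncomputable def fill {m b : ℕ} (k : ℕ) (h1 : 1 ≤ k) (h2 : k ≤ m)
    (x y : ZD (m+1) b) : ZD (m+2) b :=
  act x (degen ⟨k, by omega⟩)
    - act (act (act x (face ⟨k-1, by omega⟩)) (degen ⟨k-1, by omega⟩)) (degen ⟨k-1, by omega⟩)
    + act y (degen ⟨k-1, by omega⟩)

/-- The pasting operation `x ⋆ₖ y`. -/
noncomputable def paste {m b : ℕ} (k : ℕ) (h1 : 1 ≤ k) (h2 : k ≤ m)
    (x y : ZD (m+1) b) : ZD (m+1) b :=
  x - act (act x (face ⟨k-1, by omega⟩)) (degen ⟨k-1, by omega⟩) + y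

/-- `x` is degenerate at `k`, i.e. `x = y σₖ` for some `y` one dimension lower. -/
def isDegenAt {a b : ℕ} (x : ZD a b) (k : ℕ) : Prop :=
  ∃ (p : ℕ) (hp : a = p + 1) (hk : k < p) (y : ZD p b),
    x = hp ▸ act y (degen ⟨k, hk⟩)

def isDegen {a b : ℕ} (x : ZD a b) : Prop := ∃ k, isDegenAt x k

/-- The number of preimages of the top element `n` under `α`. -/
def npre {a n : ℕ} (α : Fin a →o Fin (n+1)) : ℕ :=
  (Finset.univ.filter fun i => α i = Fin.last n).card

/-- `x` lies in the simplicial subset `A`: all operators in the support of `x`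
have equally many preimages of the top element. -/
def inA {a n : ℕ} (x : ZD a (n+1)) : Prop :=
  ∀ α ∈ x.support, ∀ β ∈ x.support, npre α = npre β

/-- `r` is the rank of `x`: the least `i` such that some `α ∈ supp x` has `α i = n`. -/
def isRank {a n : ℕ} (x : ZD a (n+1)) (r : Fin a) : Prop :=
  IsLeast {i : Fin a | ∃ α ∈ x.support, α i = Fin.last n} r

/-- `x̌`: the part of `x` supported on operators with `α r < n`. -/
noncomputable def checkPart {a n : ℕ} (x : ZD a (n+1)) (r : Fin a) : ZD a (n+1) :=
  x.filter (fun α => ¬ (α r = Fin.last n))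

/-- `x̄`: the part of `x` supported on operators with `α r = n`. -/
noncomputable def barPart {a n : ℕ} (x : ZD a (n+1)) (r : Fin a) : ZD a (n+1) :=
  x.filter (fun α => α r = Fin.last n)

/-- `ℓ` is the level of `x` (with rank `r`). -/
def isLevel {a n : ℕ} (x : ZD a (n+1)) (r ℓ : Fin a) : Prop :=
  IsLeast {i : Fin a | ∀ α ∈ (checkPart x r).support, α i = α r} ℓ

/-- Condition (†): `x̄` is degenerate at `ℓ - 1`. -/
def dagger {a n : ℕ} (x : ZD a (n+1)) (r ℓ : Fin a) : Prop :=
  isDegenAt (barPart x r) ((ℓ : ℕ) - 1)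

/-- The corank of `x`: the greatest number of preimages of `n` among operators in `supp x`. -/
def corank {a n : ℕ} (x : ZD a (n+1)) : ℕ := x.support.sup npre

/-- `u = x̌ + (x̄ ∂ℓ) σ(ℓ-1)`. -/
noncomputable def uPart {m n : ℕ} (x : ZD (m+1) (n+1)) (r ℓ : Fin (m+1))
    (h1 : 1 ≤ (ℓ : ℕ)) : ZD (m+1) (n+1) :=
  checkPart x r
    + act (act (barPart x r) (face ℓ)) (degen ⟨(ℓ:ℕ)-1, by have := ℓ.isLt; omega⟩)

/-- `v = (x̌ ∂(ℓ-1)) σ(ℓ-1) + x̄`. -/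
noncomputable def vPart {m n : ℕ} (x : ZD (m+1) (n+1)) (r ℓ : Fin (m+1))
    (h1 : 1 ≤ (ℓ : ℕ)) : ZD (m+1) (n+1) :=
  act (act (checkPart x r) (face ⟨(ℓ:ℕ)-1, by have := ℓ.isLt; omega⟩))
      (degen ⟨(ℓ:ℕ)-1, by have := ℓ.isLt; omega⟩)
    + barPart x r

/-- The parent `w = x̌ σℓ + x̄ σ(ℓ-1)`. -/
noncomputable def parent {m n : ℕ} (x : ZD (m+1) (n+1)) (r ℓ : Fin (m+1)) :
    ZD (m+2) (n+1) :=
  act (checkPart x r) (degen ℓ)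
    + act (barPart x r) (degen ⟨(ℓ:ℕ)-1, by have := ℓ.isLt; omega⟩)

/-- Bilinear extension of composition: `(x ∘ y)_γ = Σ_{α∘β = γ} x_α · y_β`. -/
noncomputable def zcomp {p m n : ℕ} (x : ZD m n) (y : ZD p m) : ZD p n :=
  x.sum fun α c => c • Finsupp.mapDomain (fun β => α.comp β) y

/-! ### Pairings and the action of operators -/

/-- The pairing of `x` with a function on operators: `Σ_α x_α · f α`. -/
noncomputable def pairing {a b : ℕ} (f : (Fin a →o Fin b) → ℤ) (x : ZD a b) : ℤ :=
  x.sum fun α c => c * f α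

lemma pairing_act {a b c : ℕ} (f : (Fin a →o Fin c) → ℤ) (x : ZD b c) (β : Fin a →o Fin b) :
    pairing f (act x β) = pairing (fun α => f (α.comp β)) x := by
  unfold pairing act
  rw [Finsupp.sum_mapDomain_index]
  · intro _; simp
  · intro _ _ _; ring

lemma pairing_add_fun {a b : ℕ} (f g : (Fin a →o Fin b) → ℤ) (x : ZD a b) :
    pairing (fun α => f α + g α) x = pairing f x + pairing g x := by
  simp [pairing, mul_add, Finsupp.sum_add]

lemma pairing_single {a b : ℕ} (f : (Fin a →o Fin b) → ℤ) (α : Fin a →o Fin b) (c : ℤ) :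
    pairing f (Finsupp.single α c) = c * f α := by
  simp [pairing]

lemma pairing_eq_zero {a b : ℕ} (f : (Fin a →o Fin b) → ℤ) (x : ZD a b)
    (h : ∀ α, 0 ≤ x α * f α) (h0 : pairing f x = 0) (α : Fin a →o Fin b) : x α * f α = 0 := by
  by_cases hα : α ∈ x.support
  · exact (Finset.sum_eq_zero_iff_of_nonneg (fun i _ => h i)).1 h0 α hα
  · simp [Finsupp.notMem_support_iff.1 hα]

lemma pairing_nonneg {a b : ℕ} (f : (Fin a →o Fin b) → ℤ) (x : ZD a b)
    (h : ∀ α, 0 ≤ x α * f α) : 0 ≤ pairing f x :=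
  Finset.sum_nonneg fun i _ => h i

lemma act_act {a b c d : ℕ} (x : ZD c d) (β : Fin b →o Fin c) (γ : Fin a →o Fin b) :
    act (act x β) γ = act x (β.comp γ) := by
  unfold act
  rw [← Finsupp.mapDomain_comp]
  rfl

lemma act_id {a b : ℕ} (x : ZD a b) : act x OrderHom.id = x := by
  unfold act
  exact Finsupp.mapDomain_id

lemma act_sub {a b c : ℕ} (x y : ZD b c) (β : Fin a →o Fin b) :
    act (x - y) β = act x β - act y β :=
  (Finsupp.mapDomain.addMonoidHom (fun α : Fin b →o Fin c => α.comp β)).map_sub x y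

lemma memO.restrict {a b c : ℕ} {x : ZD b c} (hx : memO x) (β : Fin a →o Fin b)
    (hβ : Function.Injective β) : memO (act x β) := by
  refine ⟨?_, fun p β' γ hβ' hγ => ?_⟩
  · have := pairing_act (fun _ => 1) x β
    simpa [pairing, hx.1] using this
  · rw [act_act]
    exact hx.2 p _ γ (hβ.comp hβ') hγ

lemma memO.apply_nonneg {a b : ℕ} {x : ZD (a+1) b} (hx : memO x) (γ : Fin (a+1) →o Fin b)
    (hγ : Function.Injective γ) : 0 ≤ x γ := by
  have := hx.2 a OrderHom.id γ Function.injective_id hγ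
  rwa [act_id] at this

lemma memO.pairing_one {a b : ℕ} {x : ZD a b} (hx : memO x) : pairing (fun _ => 1) x = 1 := by
  simpa [pairing] using hx.1

lemma injective_of_point {X : Type*} (f : Fin (0+1) → X) : Function.Injective f :=
  fun i j _ => Fin.ext (by omega)

lemma face_injective {m : ℕ} (i : Fin (m+1)) : Function.Injective (face i) :=
  Fin.succAbove_right_injective

/-! ### Elements of `ℤΔ([m],[n])` with vanishing faces -/

/-- The Vandermonde determinant of the values of `α`. -/
def vand {a b : ℕ} (α : Fin a →o Fin b) : ℤ :=
  (Matrix.vandermonde fun i => ((α i : ℕ) : ℤ)).det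

lemma vand_pos {a b : ℕ} (α : Fin a →o Fin b) (h : Function.Injective α) : 0 < vand α := by
  unfold vand
  rw [Matrix.det_vandermonde]
  refine Finset.prod_pos fun i _ => Finset.prod_pos fun j hj => ?_
  have := (α.monotone.strictMono_of_injective h) (Finset.mem_Ioi.1 hj)
  have : (α i : ℕ) < α j := this
  omega

lemma vand_eq_zero {a b : ℕ} (α : Fin a →o Fin b) (h : ¬ Function.Injective α) : vand α = 0 := by
  by_contra h0
  apply h
  intro i j hij
  exact Matrix.det_vandermonde_ne_zero_iff.1 h0 (by simp [hij])

/-- If all faces of `z` vanish, then so does its pairing with the Vandermonde determinant: expand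
the determinant along the column of ones. -/
lemma pairing_vand_eq_zero {m b : ℕ} (z : ZD (m+1) b) (h : ∀ i, act z (face i) = 0) :
    pairing vand z = 0 := by
  let g : (Fin m →o Fin b) → ℤ := fun δ =>
    (Matrix.of fun (i j : Fin m) => (((δ i : ℕ) : ℤ)) ^ ((j : ℕ) + 1)).det
  have hv : ∀ α : Fin (m+1) →o Fin b,
      vand α = ∑ i : Fin (m+1), (-1) ^ (i : ℕ) * g (α.comp (face i)) := by
    intro α
    unfold vand
    rw [Matrix.det_succ_column_zero]
    refine Finset.sum_congr rfl fun i _ => ?_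
    simp only [Matrix.vandermonde_apply, Fin.val_zero, pow_zero, mul_one]
    congr 2
  have hg : ∀ i, pairing (fun α => g (α.comp (face i))) z = 0 := by
    intro i
    rw [← pairing_act, h i]
    simp [pairing]
  unfold pairing Finsupp.sum at hg ⊢
  simp_rw [hv, Finset.mul_sum]
  rw [Finset.sum_comm]
  refine Finset.sum_eq_zero fun i _ => ?_
  have : ∀ α, z α * ((-1) ^ (i : ℕ) * g (α.comp (face i)))
      = (-1) ^ (i : ℕ) * (z α * g (α.comp (face i))) := fun α => by ring
  simp_rw [this]
  rw [← Finset.mul_sum, hg i, mul_zero]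

/-- An element supported on degenerate operators, all of whose faces vanish, is zero. -/
lemma eq_zero_of_degenerate {m b : ℕ} (z : ZD (m+2) b) (h : ∀ i, act z (face i) = 0)
    (hd : ∀ α ∈ z.support, ∃ j : Fin (m+1), α j.castSucc = α j.succ) : z = 0 := by
  by_contra hz
  obtain ⟨α, hα, hmax⟩ := z.support.exists_maximal (Finsupp.support_nonempty_iff.2 hz)
  obtain ⟨j, hj⟩ := hd α hα
  have huniq : ∀ α' ∈ z.support, α'.comp (face j.succ) = α.comp (face j.succ) → α' = α := by
    intro α' hα' he
    have hne : ∀ i, i ≠ j.succ → α' i = α i := by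
      intro i hi
      obtain ⟨k, rfl⟩ := Fin.exists_succAbove_eq hi
      exact DFunLike.congr_fun he k
    have hle : α ≤ α' := by
      intro i
      by_cases hi : i = j.succ
      · subst hi
        change α j.succ ≤ α' j.succ
        rw [← hj, ← hne j.castSucc (by simp [Fin.ext_iff])]
        exact α'.monotone (Fin.castSucc_le_succ j)
      · exact (hne i hi).ge
    exact le_antisymm (hmax hα' hle) hle
  have h1 : pairing (fun δ => if δ = α.comp (face j.succ) then 1 else 0)
      (act z (face j.succ)) = z α := by
    rw [pairing_act]
    unfold pairing Finsupp.sum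
    rw [Finset.sum_eq_single α]
    · simp
    · intro α' hα' hne
      dsimp only
      rw [if_neg (fun he => hne (huniq α' hα' he)), mul_zero]
    · intro h
      exact absurd hα h
  rw [h] at h1
  exact Finsupp.mem_support_iff.1 hα (by rw [← h1]; simp [pairing])

lemma exists_degenerate_of_not_injective {m b : ℕ} (α : Fin (m+1) →o Fin b)
    (h : ¬ Function.Injective α) : ∃ j : Fin m, α j.castSucc = α j.succ := by
  by_contra! hc
  refine h (StrictMono.injective ?_)
  exact Fin.strictMono_iff_lt_succ.2 fun i =>
    lt_of_le_of_ne (α.monotone (Fin.castSucc_le_succ i)) (hc i)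

/-! ### Maps sending the initial vertex to the top vertex -/

/-- The constant operator with value the top element. -/
def topConst (a n : ℕ) : Fin a →o Fin (n+1) := ⟨fun _ => Fin.last n, fun _ _ _ => le_rfl⟩

/-- The defect `Σ_α x_α (n - α v)` of `x` at the vertex `v`. -/
noncomputable def defect {a n : ℕ} (x : ZD a (n+1)) (v : Fin a) : ℤ :=
  pairing (fun α => (n : ℤ) - (α v : ℕ)) x

lemma memO.eq_single_of_defect {m n : ℕ} (x : ZD (m+1) (n+1)) (hx : memO x)
    (hv : ∀ v, defect x v = 0) : x = Finsupp.single (topConst _ n) 1 := by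
  induction m with
  | zero =>
    have hinj : ∀ α : Fin (0+1) →o Fin (n+1), Function.Injective α :=
      fun α => injective_of_point _
    have h0 := pairing_eq_zero _ x (fun α => mul_nonneg (hx.apply_nonneg α (hinj α))
      (by have := (α 0).isLt; omega)) (hv 0)
    have h1 : ∀ α, α ≠ topConst _ n → x α = 0 := by
      intro α hα
      rcases mul_eq_zero.1 (h0 α) with h | h
      · exact h
      · refine absurd ?_ hα
        ext i
        have : i = 0 := Fin.ext (by omega)
        subst this
        change (α 0 : ℕ) = n
        omega
    have h2 : x = Finsupp.single (topConst _ n) (x (topConst _ n)) := by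
      ext α
      by_cases hα : α = topConst _ n
      · simp [hα]
      · rw [h1 α hα, Finsupp.single_eq_of_ne hα]
    have h3 := hx.pairing_one
    rw [h2, pairing_single, mul_one] at h3
    rw [h2, h3]
  | succ m ih =>
    have hface : ∀ i, act x (face i) = Finsupp.single (topConst _ n) 1 := by
      intro i
      refine ih _ (hx.restrict _ (face_injective i)) fun v => ?_
      unfold defect
      rw [pairing_act]
      exact hv (face i v)
    rw [← sub_eq_zero]
    have hz : ∀ i, act (x - Finsupp.single (topConst _ n) 1) (face i) = 0 := by
      intro i
      rw [act_sub, hface, sub_eq_zero]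
      unfold act
      rw [Finsupp.mapDomain_single]
      rfl
    have hnc : ∀ γ : Fin (m+1+1) →o Fin (n+1), Function.Injective γ → γ ≠ topConst _ n := by
      rintro γ hγ rfl
      exact absurd (hγ (show topConst _ n 0 = topConst _ n 1 from rfl)) (by simp)
    refine eq_zero_of_degenerate _ hz fun α hα => exists_degenerate_of_not_injective α fun hinj => ?_
    refine Finsupp.mem_support_iff.1 hα ?_
    have := pairing_eq_zero vand _ (fun γ => ?_) (pairing_vand_eq_zero _ hz) α
    · exact (mul_eq_zero.1 this).resolve_right (vand_pos α hinj).ne'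
    · by_cases hγ : Function.Injective γ
      · refine mul_nonneg ?_ (vand_pos γ hγ).le
        rw [Finsupp.sub_apply, Finsupp.single_eq_of_ne (hnc γ hγ), sub_zero]
        exact hx.apply_nonneg γ hγ
      · rw [vand_eq_zero γ hγ, mul_zero]

/-- The defect at `v` is computed on the vertex `x v ∈ O(0,n)`, whose coefficients are
nonnegative. -/
lemma memO.defect_nonneg {m n : ℕ} {x : ZD (m+1) (n+1)} (hx : memO x) (v : Fin (m+1)) :
    0 ≤ defect x v := by
  let β : Fin (0+1) →o Fin (m+1) := ⟨fun _ => v, fun _ _ _ => le_rfl⟩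
  have hβ : Function.Injective β := injective_of_point _
  have h := pairing_act (fun δ : Fin (0+1) →o Fin (n+1) => (n : ℤ) - (δ 0 : ℕ)) x β
  change 0 ≤ pairing (fun α => (n : ℤ) - (α.comp β 0 : ℕ)) x
  rw [← h]
  refine pairing_nonneg _ _ fun δ => mul_nonneg
    ((hx.restrict β hβ).apply_nonneg δ (injective_of_point _)) ?_
  have := (δ 0).isLt
  omega

/-- The defect does not increase from the initial vertex to `v`: the difference is computed on the edge
from `0` to `v`, where only injective operators contribute. -/
lemma memO.defect_le {m n : ℕ} {x : ZD (m+1) (n+1)} (hx : memO x) (v : Fin (m+1)) :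
    defect x v ≤ defect x 0 := by
  rcases eq_or_ne v 0 with rfl | hv
  · exact le_rfl
  have hv' : 0 < v := Fin.pos_iff_ne_zero.2 hv
  have hmono : StrictMono ![(0 : Fin (m+1)), v] := by
    refine Fin.strictMono_iff_lt_succ.2 fun i => ?_
    fin_cases i
    simpa using hv'
  let β : Fin (1+1) →o Fin (m+1) := ⟨![0, v], hmono.monotone⟩
  have hβ : Function.Injective β := hmono.injective
  have h := pairing_act (fun δ : Fin (1+1) →o Fin (n+1) => ((δ 1 : ℕ) : ℤ) - (δ 0 : ℕ)) x β
  have hn : 0 ≤ pairing (fun δ : Fin (1+1) →o Fin (n+1) => ((δ 1 : ℕ) : ℤ) - (δ 0 : ℕ))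
      (act x β) := by
    refine pairing_nonneg _ _ fun δ => ?_
    have hle : (δ 0 : ℕ) ≤ δ 1 := δ.monotone (Fin.zero_le 1)
    rcases hle.eq_or_lt with he | hlt
    · simp [he]
    · refine mul_nonneg ((hx.restrict β hβ).apply_nonneg δ (StrictMono.injective ?_)) (by omega)
      refine Fin.strictMono_iff_lt_succ.2 fun i => ?_
      fin_cases i
      exact hlt
  have hsum : defect x 0 = pairing (fun α => ((n : ℤ) - (α v : ℕ)) + ((α v : ℕ) - (α 0 : ℕ))) x := by
    unfold defect
    congr 1
    funext α
    ring
  rw [pairing_add_fun] at hsum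
  have h' : pairing (fun α : Fin (m+1) →o Fin (n+1) => ((α v : ℕ) : ℤ) - (α 0 : ℕ)) x
      = pairing (fun δ : Fin (1+1) →o Fin (n+1) => ((δ 1 : ℕ) : ℤ) - (δ 0 : ℕ)) (act x β) :=
    h.symm
  rw [h'] at hsum
  unfold defect at hsum ⊢
  omega

/-- If the constant operator at the top vertex occurs in `x`, then `x` equals it. -/
lemma memO.eq_single_of_mem_support {m n : ℕ} {x : ZD (m+1) (n+1)} (hx : memO x)
    (h : topConst _ n ∈ x.support) : x = Finsupp.single (topConst _ n) 1 := by
  let β : Fin (0+1) →o Fin (m+1) := ⟨fun _ => 0, fun _ _ _ => le_rfl⟩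
  have hy : memO (act x β) := hx.restrict β (injective_of_point _)
  have hpos : ∀ δ, 0 ≤ act x β δ := fun δ =>
    hy.apply_nonneg δ (injective_of_point _)
  let f : (Fin (0+1) →o Fin (n+1)) → ℤ := fun δ => if δ 0 = Fin.last n then 1 else 0
  -- Only the constant operator takes the value `n` at `0`.
  have hc : pairing f (act x β) = x (topConst _ n) := by
    rw [pairing_act]
    unfold pairing Finsupp.sum
    rw [Finset.sum_eq_single (topConst _ n)]
    · change _ * (if Fin.last n = Fin.last n then (1 : ℤ) else 0) = _
      simp
    · intro α _ hne
      have : ¬ α 0 = Fin.last n := by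
        intro h0
        apply hne
        ext i
        exact congrArg Fin.val (le_antisymm (Fin.le_last _) (h0.symm.le.trans (α.monotone (Fin.zero_le i))))
      change _ * (if α 0 = Fin.last n then (1 : ℤ) else 0) = _
      simp [this]
    · intro h'
      exact absurd h h'
  have hf0 : 0 ≤ pairing f (act x β) := pairing_nonneg _ _ fun δ =>
    mul_nonneg (hpos δ) (by dsimp only [f]; split_ifs <;> simp)
  have hsplit : pairing (fun _ => (1 : ℤ)) (act x β)
      = pairing f (act x β) + pairing (fun δ => 1 - f δ) (act x β) := by
    rw [← pairing_add_fun]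
    congr 1
    funext δ
    ring
  have hg : ∀ δ, 0 ≤ act x β δ * (1 - f δ) := fun δ =>
    mul_nonneg (hpos δ) (by dsimp only [f]; split_ifs <;> simp)
  have hg0 : pairing (fun δ => 1 - f δ) (act x β) = 0 := by
    have h1 := pairing_nonneg _ _ hg
    have h2 := hy.pairing_one
    have h3 := Finsupp.mem_support_iff.1 h
    omega
  have hz := pairing_eq_zero _ _ hg hg0
  have hd0 : defect x 0 = 0 := by
    change pairing (fun α => (n : ℤ) - (α.comp β 0 : ℕ)) x = 0
    rw [← pairing_act (fun δ : Fin (0+1) →o Fin (n+1) => (n : ℤ) - (δ 0 : ℕ))]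
    refine Finset.sum_eq_zero fun δ _ => ?_
    have := hz δ
    by_cases hδ : δ 0 = Fin.last n
    · simp [hδ]
    · simp only [f, if_neg hδ, sub_zero, mul_one] at this
      simp [this]
  exact hx.eq_single_of_defect x fun v =>
    le_antisymm (hd0 ▸ hx.defect_le v) (hx.defect_nonneg v)

/-! ### Degeneracy in terms of supports -/

lemma isDegenAt.lt_and_apply_eq {m b k : ℕ} {x : ZD (m+1) b} (h : isDegenAt x k) :
    ∃ hk : k < m, ∀ α ∈ x.support, α (Fin.castSucc ⟨k, hk⟩) = α (Fin.succ ⟨k, hk⟩) := by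
  classical
  obtain ⟨p, hp, hk, y, hy⟩ := h
  obtain rfl : m = p := by omega
  refine ⟨hk, fun α hα => ?_⟩
  simp only at hy
  rw [hy] at hα
  obtain ⟨δ, _, rfl⟩ := Finset.mem_image.1 (Finsupp.mapDomain_support hα)
  change δ (Fin.predAbove _ _) = δ (Fin.predAbove _ _)
  rw [Fin.predAbove_castSucc_self, Fin.predAbove_succ_self]

lemma isDegenAt_of_apply_eq {m b : ℕ} {x : ZD (m+1) b} (k : Fin m)
    (h : ∀ α ∈ x.support, α k.castSucc = α k.succ) : isDegenAt x k := by
  refine ⟨m, rfl, k.isLt, act x (face k.succ), ?_⟩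
  change x = act (act x (face k.succ)) (degen k)
  rw [act_act]
  unfold act
  conv_lhs => rw [← Finsupp.mapDomain_id (v := x)]
  refine Finsupp.mapDomain_congr fun α hα => ?_
  ext i
  change (α i : ℕ) = α (k.succ.succAbove (k.predAbove i))
  by_cases hi : i = k.succ
  · subst hi
    rw [Fin.predAbove_succ_self, Fin.succAbove_succ_self, h α hα]
  · congr 2
    obtain ⟨j, rfl⟩ := Fin.exists_succAbove_eq hi
    congr 1
    rcases le_or_gt j k with hjk | hjk
    · rw [Fin.succAbove_of_castSucc_lt _ _ (Fin.castSucc_lt_succ_iff.2 hjk),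
        Fin.predAbove_castSucc_of_le _ _ hjk]
    · rw [Fin.succAbove_of_le_castSucc _ _ (Fin.succ_le_castSucc_iff.2 hjk),
        Fin.predAbove_succ_of_le _ _ hjk.le]

/-- If `x` satisfies (†), then `α ↦ α ∂ℓ` is injective on `supp x`, and
`supp (x ∂ℓ) = {α ∂ℓ : α ∈ supp x}`. -/
theorem stmt13 (m n : ℕ) (x : ZD (m+1) (n+1)) (hx : memO x) (hnd : ¬ isDegen x)
    (hA : ¬ inA x) (r ℓ : Fin (m+1)) (hr : isRank x r) (hl : isLevel x r ℓ)
    (hdag : dagger x r ℓ) :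
    Set.InjOn (fun α : Fin (m+1) →o Fin (n+1) => α.comp (face ℓ)) ↑x.support ∧
    ↑(act x (face ℓ)).support
      = (fun α : Fin (m+1) →o Fin (n+1) => α.comp (face ℓ)) '' ↑x.support := by
  classical
  have hcheck : ∀ α ∈ x.support, α r ≠ Fin.last n → α ℓ = α r := by
    intro α hα hαr
    refine hl.1 α ?_
    rw [checkPart, Finsupp.support_filter, Finset.mem_filter]
    exact ⟨hα, hαr⟩
  obtain ⟨hk, hbar'⟩ := isDegenAt.lt_and_apply_eq hdag
  have hbar : ∀ α ∈ x.support, α r = Fin.last n →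
      α (Fin.castSucc ⟨(ℓ : ℕ) - 1, hk⟩) = α (Fin.succ ⟨(ℓ : ℕ) - 1, hk⟩) := by
    intro α hα hαr
    refine hbar' α ?_
    rw [barPart, Finsupp.support_filter, Finset.mem_filter]
    exact ⟨hα, hαr⟩
  have hle : ℓ ≤ r := hl.2 fun _ _ => rfl
  obtain ⟨α₀, hα₀, hα₀r⟩ := hr.1
  have hpos : 0 < (ℓ : ℕ) := by
    by_contra hℓ
    have hℓ0 : (ℓ : ℕ) = 0 := by omega
    rcases hle.eq_or_lt with he | hlt
    · have hc : α₀ = topConst _ n := by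
        ext i
        have hri : r ≤ i := by
          rw [← he, Fin.le_def]
          omega
        exact congrArg Fin.val (le_antisymm (Fin.le_last _) (hα₀r.symm.le.trans (α₀.monotone hri)))
      have hs := hx.eq_single_of_mem_support (hc ▸ hα₀)
      apply hA
      intro α hα β hβ
      rw [hs, Finsupp.support_single _ one_ne_zero, Finset.mem_singleton] at hα hβ
      rw [hα, hβ]
    · refine hnd ⟨_, isDegenAt_of_apply_eq ⟨(ℓ : ℕ) - 1, hk⟩ fun α hα => ?_⟩
      by_cases hαr : α r = Fin.last n
      · exact hbar α hα hαr
      · have h0 : Fin.castSucc ⟨(ℓ : ℕ) - 1, hk⟩ = ℓ := by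
          ext
          simp [hℓ0]
        have h1 : Fin.succ ⟨(ℓ : ℕ) - 1, hk⟩ ≤ r := by
          rw [Fin.lt_def] at hlt
          rw [Fin.le_def, Fin.val_succ]
          change (ℓ : ℕ) - 1 + 1 ≤ r
          omega
        refine le_antisymm (α.monotone (Fin.castSucc_le_succ _)) ?_
        rw [h0, hcheck α hα hαr]
        exact α.monotone h1
  have hsucc : Fin.succ ⟨(ℓ : ℕ) - 1, hk⟩ = ℓ := by
    ext
    simp only [Fin.val_succ]
    omega
  have hpred : Fin.castSucc ⟨(ℓ : ℕ) - 1, hk⟩ < ℓ := by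
    rw [Fin.lt_def]
    change (ℓ : ℕ) - 1 < ℓ
    omega
  have hlt : ℓ < r := by
    refine lt_of_le_of_ne hle fun he => ?_
    have h1 := hbar α₀ hα₀ hα₀r
    rw [hsucc, (congrArg α₀ he).trans hα₀r] at h1
    have h2 := hr.2 ⟨α₀, hα₀, h1⟩
    exact absurd (he.le.trans h2) (not_le.2 hpred)
  have hinj : Set.InjOn (fun α : Fin (m+1) →o Fin (n+1) => α.comp (face ℓ)) ↑x.support := by
    intro α hα β hβ he
    have hne : ∀ i, i ≠ ℓ → α i = β i := by
      intro i hi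
      obtain ⟨k, rfl⟩ := Fin.exists_succAbove_eq hi
      exact DFunLike.congr_fun he k
    have hr' := hne r hlt.ne'
    have hℓ : α ℓ = β ℓ := by
      by_cases hαr : α r = Fin.last n
      · have h1 := hbar α hα hαr
        have h2 := hbar β hβ (hr' ▸ hαr)
        rw [hsucc] at h1 h2
        rw [← h1, ← h2, hne _ hpred.ne]
      · rw [hcheck α hα hαr, hcheck β hβ (hr' ▸ hαr), hr']
    refine OrderHom.ext _ _ (funext fun i => ?_)
    by_cases hi : i = ℓ
    · rw [hi, hℓ]
    · exact hne i hi
  refine ⟨hinj, ?_⟩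
  unfold act
  rw [Finsupp.mapDomain_support_of_injOn x hinj, Finset.coe_image]
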